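/- Let B be a block configuration on the torus T_{n,m} such that for every block-free square p, a robot starting at p can pass over every square not in B. Then |B| ≥ min(n,m). More precisely, if there exist a row R_i and a column C_j both containing no block of B, then a robot starting at their intersection (i,j) can never leave the set of squares R_i ∪ C_j. -/

import Mathlib

/-- Squares of the torus `T_{n,m}`: (row, column) pairs taken modulo `n` and `m`. -/
abbrev TSq (n m : ℕ) : Type := ZMod n × ZMod m

/-- The four axis directions on the torus. -/
def dirsT (n m : ℕ) : Set (TSq n m) := {(1, 0), (-1, 0), (0, 1), (0, -1)}

/-- Sliding from `p` in direction `d` travels exactly `k` steps: all squares along the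
way are block-free and the robot stops on the square immediately before the first
block of `B` encountered in direction `d`.  If the relevant row or column contains no
block, no such `k` exists and the move is impossible. -/
def IsSlideT {n m : ℕ} (B : Finset (TSq n m)) (p d : TSq n m) (k : ℕ) : Prop :=
  (∀ t : ℕ, t ≤ k → p + t • d ∉ B) ∧ p + (k + 1) • d ∈ B

/-- One move of the robot on the torus. -/
def MoveT {n m : ℕ} (B : Finset (TSq n m)) (p q : TSq n m) : Prop :=
  ∃ d ∈ dirsT n m, ∃ k : ℕ, IsSlideT B p d k ∧ q = p + k • d

/-- The robot, starting on `p`, can stop on `q` after a finite sequence of moves. -/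
def ReachesT {n m : ℕ} (B : Finset (TSq n m)) : TSq n m → TSq n m → Prop :=
  Relation.ReflTransGen (MoveT B)

/-- The robot, starting on `p₀`, passes over the square `s`: during some move of a
finite sequence of moves it occupies or slides through `s`. -/
def PassesT {n m : ℕ} (B : Finset (TSq n m)) (p₀ s : TSq n m) : Prop :=
  ∃ p, ReachesT B p₀ p ∧ ∃ d ∈ dirsT n m, ∃ k t : ℕ,
    IsSlideT B p d k ∧ t ≤ k ∧ s = p + t • d

/-- `B` solves the block-pass game on the torus from the block-free starting square
`p₀`: the robot can pass over every square not in `B`. -/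
def SolvesPassT {n m : ℕ} (B : Finset (TSq n m)) (p₀ : TSq n m) : Prop :=
  p₀ ∉ B ∧ ∀ s : TSq n m, s ∉ B → PassesT B p₀ s

/-- `opt^P_B(T_{n,m})`: the minimum number of blocks solving the block-pass game on
the torus (from some fixed block-free starting square). -/
noncomputable def optPBT (n m : ℕ) : ℕ :=
  sInf {k | ∃ B : Finset (TSq n m), ∃ p₀ : TSq n m, SolvesPassT B p₀ ∧ B.card = k}

/-- From the intersection of an empty row and an empty column no slide is possible. -/
theorem no_slide {n m : ℕ} (B : Finset (TSq n m)) (i : ZMod n) (j : ZMod m)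
    (hi : ∀ q ∈ B, q.1 ≠ i) (hj : ∀ q ∈ B, q.2 ≠ j) (d : TSq n m) (hd : d ∈ dirsT n m)
    (k : ℕ) : ¬ IsSlideT B (i, j) d k := by
  rintro ⟨-, h⟩
  have h1 := hi _ h
  have h2 := hj _ h
  simp only [dirsT, Set.mem_insert_iff, Set.mem_singleton_iff] at hd
  rcases hd with rfl | rfl | rfl | rfl
  · exact h2 (by simp)
  · exact h2 (by simp)
  · exact h1 (by simp)
  · exact h1 (by simp)

theorem no_pass {n m : ℕ} (B : Finset (TSq n m)) (i : ZMod n) (j : ZMod m)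
    (hi : ∀ q ∈ B, q.1 ≠ i) (hj : ∀ q ∈ B, q.2 ≠ j) (s : TSq n m) :
    ¬ PassesT B (i, j) s := by
  rintro ⟨p, hp, d, hd, k, t, hk, -, -⟩
  rcases Relation.ReflTransGen.cases_head hp with h | ⟨c, ⟨d', hd', k', hk', -⟩, -⟩
  · subst h
    exact no_slide B i j hi hj d hd k hk
  · exact no_slide B i j hi hj d' hd' k' hk'

/-- A map from a small finset into `ZMod n` misses some value. -/
theorem exists_missed {α : Type*} (n : ℕ) (hn : 1 ≤ n) (B : Finset α) (f : α → ZMod n)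
    (h : B.card < n) : ∃ i : ZMod n, ∀ q ∈ B, f q ≠ i := by
  classical
  haveI : NeZero n := ⟨by omega⟩
  by_contra! hc
  have hsub : (Finset.univ : Finset (ZMod n)) ⊆ B.image f := by
    intro i _
    obtain ⟨q, hq, hqi⟩ := hc i
    exact Finset.mem_image.2 ⟨q, hq, hqi⟩
  have h1 := Finset.card_le_card hsub
  have h2 := Finset.card_image_le (s := B) (f := f)
  rw [Finset.card_univ, ZMod.card] at h1
  omega

/-- If `B` is a block configuration on the torus `T_{n,m}` such that from every
block-free starting square the robot can pass over every square not in `B`, then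
`|B| ≥ min(n,m)`.  More precisely, if row `R_i` and column `C_j` contain no block,
then a robot starting at `(i,j)` can never leave `R_i ∪ C_j`. -/
theorem stmt19 (n m : ℕ) (hn : 1 ≤ n) (hm : 1 ≤ m) (B : Finset (TSq n m)) :
    ((∀ p : TSq n m, p ∉ B → ∀ s : TSq n m, s ∉ B → PassesT B p s) →
      min n m ≤ B.card) ∧
    (∀ (i : ZMod n) (j : ZMod m), (∀ q ∈ B, q.1 ≠ i) → (∀ q ∈ B, q.2 ≠ j) →
      ∀ s : TSq n m, PassesT B (i, j) s → s.1 = i ∨ s.2 = j) := by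
  refine ⟨fun H => ?_, fun i j hi hj s hs => absurd hs (no_pass B i j hi hj s)⟩
  by_contra! hlt
  obtain ⟨i, hi⟩ := exists_missed n hn B Prod.fst (lt_of_lt_of_le hlt (min_le_left _ _))
  obtain ⟨j, hj⟩ := exists_missed m hm B Prod.snd (lt_of_lt_of_le hlt (min_le_right _ _))
  have hp : ((i, j) : TSq n m) ∉ B := fun h => hi _ h rfl
  exact no_pass B i j hi hj _ (H _ hp _ hp)
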